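/- Let a, b, c, d be positive integers with bc − ad = 1 and a > b, and set A = [[a, −b], [c, −d]] ∈ SL(2,ℤ). Suppose c_1, …, c_k are positive integers with c_i ≥ 2 for all 2 ≤ i ≤ k, such that K_k(c_1, …, c_k) = a and K_{k−1}(c_2, …, c_k) = c (equivalently, a/c = ⟦c_1, …, c_k⟧). Then A = M(c_1, …, c_k), and k is the smallest length of any presentation ±A = M(d_1, …, d_m) with positive integers d_1, …, d_m. -/

import Mathlib

/-- `M(c₁, …, c_n) = [[c₁,−1],[1,0]] ⋯ [[c_n,−1],[1,0]]`. -/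
def Mneg (cs : List ℤ) : Matrix (Fin 2) (Fin 2) ℤ :=
  (cs.map fun c => !![c, -1; 1, 0]).prod

/-- The continuant `K_k(c₁, …, c_k)`, with `K₀ = 1` (empty list) and the
(left-peeling) recursion `K(c₁, c₂, …) = c₁·K(c₂, …) − K(c₃, …)`. -/
def Klist : List ℤ → ℤ
  | [] => 1
  | [x] => x
  | x :: y :: l => x * Klist (y :: l) - Klist l

theorem Mneg_cons (x : ℤ) (l : List ℤ) : Mneg (x :: l) = !![x, -1; 1, 0] * Mneg l := by
  simp [Mneg]

theorem Mneg_append (l l' : List ℤ) : Mneg (l ++ l') = Mneg l * Mneg l' := by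
  simp [Mneg]

theorem Mneg_nil : Mneg [] = !![1, 0; 0, 1] := by
  simp [Mneg, Matrix.one_fin_two]

theorem Mneg_cons_of (x p q r s : ℤ) (l : List ℤ) (h : Mneg l = !![p, -q; r, -s]) :
    Mneg (x :: l) = !![x * p - r, -(x * q - s); p, -q] := by
  rw [Mneg_cons, h]
  ext i j
  fin_cases i <;> fin_cases j <;> simp [Matrix.mul_apply, Fin.sum_univ_two] <;> ring

/-- Inequalities for lists with all entries at least `2`. -/
theorem pure_inv (u : List ℤ) (hu : ∀ x ∈ u, 2 ≤ x) :
    ∃ p q r s : ℤ, Mneg u = !![p, -q; r, -s] ∧ r - s ≤ p - q ∧ 1 ≤ r - s ∧ 1 ≤ q - s ∧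
      0 ≤ q ∧ 0 ≤ r ∧ r + 1 ≤ p ∧ -1 ≤ s := by
  induction u with
  | nil => exact ⟨1, 0, 0, -1, by simp [Mneg_nil], by norm_num⟩
  | cons x u ih =>
    obtain ⟨p, q, r, s, h, h1, h2, h3, h4, h5, h6, h7⟩ := ih (fun y hy => hu y (by simp [hy]))
    have hx : 2 ≤ x := hu x (by simp)
    refine ⟨x * p - r, x * q - s, p, q, Mneg_cons_of x p q r s u h, ?_, ?_, ?_, ?_, ?_, ?_, ?_⟩ <;>
      nlinarith

theorem first_col (l : List ℤ) : Mneg l 0 0 = Klist l ∧ (l ≠ [] → Mneg l 1 0 = Klist l.tail) := by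
  induction l with
  | nil => simp [Mneg_nil, Klist]
  | cons x l ih =>
    rw [Mneg_cons]
    cases l with
    | nil => simp [Mneg_nil, Klist, Matrix.mul_apply, Fin.sum_univ_two]
    | cons y l =>
      have h2 := ih.2 (by simp)
      have h1 := ih.1
      simp only [Matrix.mul_apply, Fin.sum_univ_two]
      rw [h1, h2]
      simp [Klist]
      ring

theorem head_cancel (x y : ℤ) (u v : List ℤ) (hu : ∀ z ∈ u, 2 ≤ z) (hv : ∀ z ∈ v, 2 ≤ z)
    (h : Mneg (x :: u) = Mneg (y :: v)) : Mneg u = Mneg v := by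
  obtain ⟨p, q, r, s, e, h1, h2, h3, h4, h5, h6, h7⟩ := pure_inv u hu
  obtain ⟨p', q', r', s', e', h1', h2', h3', h4', h5', h6', h7'⟩ := pure_inv v hv
  rw [Mneg_cons_of x _ _ _ _ _ e, Mneg_cons_of y _ _ _ _ _ e'] at h
  have a1 := congrFun (congrFun h 0) 0
  have a2 := congrFun (congrFun h 0) 1
  have a3 := congrFun (congrFun h 1) 0
  have a4 := congrFun (congrFun h 1) 1
  simp at a1 a2 a3 a4
  subst a3 a4
  have hxy : x = y := by
    rcases lt_trichotomy x y with hl | hl | hl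
    · nlinarith
    · exact hl
    · nlinarith
  subst hxy
  have : r = r' := by linarith
  have : s = s' := by linarith
  subst_vars
  rw [e, e']

theorem pure_len (u v : List ℤ) (hu : ∀ z ∈ u, 2 ≤ z) (hv : ∀ z ∈ v, 2 ≤ z)
    (h : Mneg u = Mneg v) : u.length ≤ v.length := by
  induction u generalizing v with
  | nil => simp
  | cons x u ih =>
    have hu' : ∀ z ∈ u, 2 ≤ z := fun z hz => hu z (by simp [hz])
    cases v with
    | nil =>
      obtain ⟨p, q, r, s, e, h1, h2, h3, h4, h5, h6, h7⟩ := pure_inv u hu'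
      rw [Mneg_cons_of x _ _ _ _ _ e, Mneg_nil] at h
      have a3 := congrFun (congrFun h 1) 0
      simp at a3
      omega
    | cons y v =>
      have hv' : ∀ z ∈ v, 2 ≤ z := fun z hz => hv z (by simp [hz])
      have := ih v hu' hv' (head_cancel x y u v hu' hv' h)
      simpa using this

def Irr (ds : List ℤ) : Prop :=
  ∃ u s : List ℤ, (∀ z ∈ u, 2 ≤ z) ∧ (s = [] ∨ s = [1] ∨ s = [1, 1]) ∧
    (ds = s ∨ (∃ x : ℤ, 1 ≤ x ∧ ds = x :: (u ++ s)) ∨ ds = 1 :: 1 :: (u ++ s))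

def Red (ds : List ℤ) : Prop :=
  ∃ (ε : ℤ) (es : List ℤ), (ε = 1 ∨ ε = -1) ∧ (∀ z ∈ es, 1 ≤ z) ∧ es.length < ds.length ∧
    Mneg es = ε • Mneg ds

theorem red1 (x z : ℤ) (l : List ℤ) : Mneg ((x - 1) :: (z - 1) :: l) = Mneg (x :: 1 :: z :: l) := by
  simp only [Mneg_cons, ← mul_assoc]
  congr 1
  ext i j
  fin_cases i <;> fin_cases j <;> simp [Matrix.mul_apply, Fin.sum_univ_two] <;> ring

theorem red2 (x z : ℤ) (l : List ℤ) :
    Mneg ((x + z - 1) :: l) = (-1 : ℤ) • Mneg (x :: 1 :: 1 :: z :: l) := by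
  simp only [Mneg_cons, ← mul_assoc]
  rw [← Matrix.smul_mul]
  congr 1
  ext i j
  fin_cases i <;> fin_cases j <;> simp [Matrix.mul_apply, Fin.sum_univ_two] <;> ring

theorem red_of2 (x z : ℤ) (l : List ℤ) (hx : 1 ≤ x) (hz : 1 ≤ z) (hl : ∀ y ∈ l, 1 ≤ y) :
    Red (x :: 1 :: 1 :: z :: l) := by
  refine ⟨-1, (x + z - 1) :: l, Or.inr rfl, ?_, by simp, red2 x z l⟩
  intro y hy
  rcases List.mem_cons.1 hy with rfl | hy
  · omega
  · exact hl y hy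

theorem irr_or_red (ds : List ℤ) (hds : ∀ z ∈ ds, 1 ≤ z) : Irr ds ∨ Red ds := by
  induction ds with
  | nil => exact Or.inl ⟨[], [], by simp, by simp, by simp⟩
  | cons x ds ih =>
    have hds' : ∀ z ∈ ds, 1 ≤ z := fun z hz => hds z (by simp [hz])
    have hx : 1 ≤ x := hds x (by simp)
    rcases ih hds' with ⟨u, s, hu, hs, h | ⟨y, hy, h⟩ | h⟩ | ⟨ε, es, hε, hes, hlen, hM⟩
    · exact Or.inl ⟨[], s, by simp, hs, Or.inr (Or.inl ⟨x, hx, by simp [h]⟩)⟩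
    · subst h
      rcases eq_or_lt_of_le hy with rfl | hy2
      · rcases eq_or_lt_of_le hx with rfl | hx2
        · exact Or.inl ⟨u, s, hu, hs, Or.inr (Or.inr rfl)⟩
        · cases u with
          | cons z u =>
            right
            refine ⟨1, (x - 1) :: (z - 1) :: (u ++ s), Or.inl rfl, ?_, by simp, ?_⟩
            · have := hu z (by simp)
              intro w hw
              rcases List.mem_cons.1 hw with rfl | hw
              · omega
              rcases List.mem_cons.1 hw with rfl | hw
              · omega
              · exact hds' w (by simp only [List.cons_append, List.mem_cons]; tauto)
            · rw [red1]; simp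
          | nil =>
            rcases hs with rfl | rfl | rfl
            · exact Or.inl ⟨[], [1], by simp, by simp, Or.inr (Or.inl ⟨x, hx, rfl⟩)⟩
            · exact Or.inl ⟨[], [1, 1], by simp, by simp, Or.inr (Or.inl ⟨x, hx, rfl⟩)⟩
            · exact Or.inr (red_of2 x 1 [] hx le_rfl (by simp))
      · refine Or.inl ⟨y :: u, s, ?_, hs, Or.inr (Or.inl ⟨x, hx, rfl⟩)⟩
        intro w hw
        rcases List.mem_cons.1 hw with rfl | hw
        · omega
        · exact hu w hw
    · subst h
      cases u with
      | cons z u =>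
        refine Or.inr (red_of2 x z (u ++ s) hx (hds' z (by simp)) ?_)
        intro w hw
        exact hds' w (by simp only [List.cons_append, List.mem_cons]; tauto)
      | nil =>
        rcases hs with rfl | rfl | rfl
        · exact Or.inl ⟨[], [1, 1], by simp, by simp, Or.inr (Or.inl ⟨x, hx, rfl⟩)⟩
        · exact Or.inr (red_of2 x 1 [] hx le_rfl (by simp))
        · exact Or.inr (red_of2 x 1 [1] hx le_rfl (by simp))
    · refine Or.inr ⟨ε, x :: es, hε, ?_, by simpa using hlen, ?_⟩
      · intro w hw
        rcases List.mem_cons.1 hw with rfl | hw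
        · exact hx
        · exact hes w hw
      · rw [Mneg_cons, hM, Mneg_cons, Matrix.mul_smul]

theorem app1 (l : List ℤ) (p q r s : ℤ) (h : Mneg l = !![p, -q; r, -s]) :
    Mneg (l ++ [1]) = !![p - q, -p; r - s, -r] := by
  rw [Mneg_append, h, Mneg_cons, Mneg_nil]
  ext i j
  fin_cases i <;> fin_cases j <;> simp [Matrix.mul_apply, Fin.sum_univ_two] <;> ring

theorem app2 (l : List ℤ) (p q r s : ℤ) (h : Mneg l = !![p, -q; r, -s]) :
    Mneg (l ++ [1, 1]) = !![-q, -(p - q); -s, -(r - s)] := by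
  have := app1 _ _ _ _ _ (app1 l p q r s h)
  simp only [List.append_assoc, List.singleton_append] at this
  rw [this]
  ext i j
  fin_cases i <;> fin_cases j <;> simp

theorem entries (δ a b c d p q r s : ℤ)
    (h : δ • (!![a, -b; c, -d] : Matrix (Fin 2) (Fin 2) ℤ) = !![p, -q; r, -s]) :
    δ * a = p ∧ δ * b = q ∧ δ * c = r ∧ δ * d = s := by
  have a1 := congrFun (congrFun h 0) 0
  have a2 := congrFun (congrFun h 0) 1
  have a3 := congrFun (congrFun h 1) 0
  have a4 := congrFun (congrFun h 1) 1
  simp at a1 a2 a3 a4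
  exact ⟨a1, a2, a3, a4⟩

/-- An irreducible presentation of `±A` is the Hirzebruch--Jung one. -/
theorem irr_case (a b c d : ℤ) (ha : 0 < a) (hb : 0 < b) (hc : 0 < c)
    (hd : 0 < d) (hab : a > b) (ds : List ℤ) (hI : Irr ds) (δ : ℤ) (hδ : δ = 1 ∨ δ = -1)
    (h : δ • (!![a, -b; c, -d] : Matrix (Fin 2) (Fin 2) ℤ) = Mneg ds) :
    δ = 1 ∧ ∃ (x : ℤ) (u : List ℤ), (∀ z ∈ u, 2 ≤ z) ∧ ds = x :: u := by
  obtain ⟨u, s, hu, hs, hI⟩ := hI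
  obtain ⟨P, Q, R, S, e, h1, h2, h3, h4, h5, h6, h7⟩ := pure_inv u hu
  have e0 : Mneg [] = !![1, -0; 0, -(-1)] := by simp [Mneg_nil]
  rcases hI with hI | ⟨x, hx, hI⟩ | hI
  · exfalso
    rcases hs with rfl | rfl | rfl
    · rw [hI, e0] at h
      obtain ⟨k1, k2, k3, k4⟩ := entries _ _ _ _ _ _ _ _ _ h
      rcases hδ with rfl | rfl <;> omega
    · have := app1 _ _ _ _ _ e0
      rw [List.nil_append] at this
      rw [hI, this] at h
      obtain ⟨k1, k2, k3, k4⟩ := entries _ _ _ _ _ _ _ _ _ h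
      rcases hδ with rfl | rfl <;> omega
    · have := app2 _ _ _ _ _ e0
      rw [List.nil_append] at this
      rw [hI, this] at h
      obtain ⟨k1, k2, k3, k4⟩ := entries _ _ _ _ _ _ _ _ _ h
      rcases hδ with rfl | rfl <;> omega
  · have e1 := Mneg_cons_of x _ _ _ _ _ e
    have i1 : 1 ≤ x * P - R := by nlinarith
    have i2 : 1 ≤ x * Q - S := by nlinarith
    have i3 : 0 ≤ (x * P - R) - (x * Q - S) := by nlinarith
    generalize x * P - R = p at *
    generalize x * Q - S = q at *
    rcases hs with rfl | rfl | rfl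
    · rw [List.append_nil] at hI
      rw [hI, e1] at h
      obtain ⟨k1, k2, k3, k4⟩ := entries _ _ _ _ _ _ _ _ _ h
      refine ⟨?_, x, u, hu, hI⟩
      rcases hδ with rfl | rfl <;> omega
    · have := app1 _ _ _ _ _ e1
      rw [List.cons_append] at this
      rw [hI, this] at h
      obtain ⟨k1, k2, k3, k4⟩ := entries _ _ _ _ _ _ _ _ _ h
      rcases hδ with rfl | rfl <;> omega
    · have := app2 _ _ _ _ _ e1
      rw [List.cons_append] at this
      rw [hI, this] at h
      obtain ⟨k1, k2, k3, k4⟩ := entries _ _ _ _ _ _ _ _ _ h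
      rcases hδ with rfl | rfl <;> omega
  · have e1 := Mneg_cons_of 1 _ _ _ _ _ (Mneg_cons_of 1 _ _ _ _ _ e)
    exfalso
    rcases hs with rfl | rfl | rfl
    · rw [List.append_nil] at hI
      rw [hI, e1] at h
      obtain ⟨k1, k2, k3, k4⟩ := entries _ _ _ _ _ _ _ _ _ h
      rcases hδ with rfl | rfl <;> omega
    · have := app1 _ _ _ _ _ e1
      rw [List.cons_append, List.cons_append] at this
      rw [hI, this] at h
      obtain ⟨k1, k2, k3, k4⟩ := entries _ _ _ _ _ _ _ _ _ h
      rcases hδ with rfl | rfl <;> omega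
    · have := app2 _ _ _ _ _ e1
      rw [List.cons_append, List.cons_append] at this
      rw [hI, this] at h
      obtain ⟨k1, k2, k3, k4⟩ := entries _ _ _ _ _ _ _ _ _ h
      rcases hδ with rfl | rfl <;> omega

theorem min_len (a b c d : ℤ) (ha : 0 < a) (hb : 0 < b) (hc : 0 < c)
    (hd : 0 < d) (hab : a > b) (x : ℤ) (u : List ℤ) (hu : ∀ z ∈ u, 2 ≤ z)
    (hA : !![a, -b; c, -d] = Mneg (x :: u)) (n : ℕ) :
    ∀ (δ : ℤ) (ds : List ℤ), ds.length ≤ n → (δ = 1 ∨ δ = -1) → (∀ x ∈ ds, 1 ≤ x) →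
      δ • (!![a, -b; c, -d] : Matrix (Fin 2) (Fin 2) ℤ) = Mneg ds →
      (x :: u).length ≤ ds.length := by
  induction n with
  | zero =>
    intro δ ds hn hδ hds h
    have : ds = [] := List.length_eq_zero_iff.1 (by omega)
    subst this
    obtain ⟨-, y, v, -, hv⟩ := irr_case a b c d ha hb hc hd hab []
      ⟨[], [], by simp, by simp, by simp⟩ δ hδ h
    simp at hv
  | succ n ih =>
    intro δ ds hn hδ hds h
    rcases irr_or_red ds hds with hI | ⟨ε, es, hε, hes, hlen, hM⟩
    · obtain ⟨rfl, y, v, hv, rfl⟩ := irr_case a b c d ha hb hc hd hab ds hI δ hδ h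
      rw [one_smul, hA] at h
      have := pure_len u v hu hv (head_cancel x y u v hu hv h)
      simpa using this
    · have := ih (ε * δ) es (by omega) ?_ hes ?_
      · omega
      · rcases hε with rfl | rfl <;> rcases hδ with rfl | rfl <;> simp
      · rw [hM, ← h, smul_smul]

/-- let `a, b, c, d > 0` with `bc − ad = 1` and `a > b`, and
`A = [[a, −b], [c, −d]]`. If `c₁, …, c_k` are positive integers with
`c_i ≥ 2` for `2 ≤ i ≤ k` such that `K_k(c₁, …, c_k) = a` and
`K_{k−1}(c₂, …, c_k) = c` (i.e. `a/c = ⟦c₁, …, c_k⟧`), then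
`A = M(c₁, …, c_k)` and `k` is the smallest length of any presentation
`±A = M(d₁, …, d_m)` with positive integers `d_i`. -/
theorem stmt19 (a b c d : ℤ) (ha : 0 < a) (hb : 0 < b) (hc : 0 < c)
    (hd : 0 < d) (hdet : b * c - a * d = 1) (hab : a > b)
    (cs : List ℤ) (hne : cs ≠ [])
    (hpos : ∀ x ∈ cs, 1 ≤ x) (htail : ∀ x ∈ cs.tail, 2 ≤ x)
    (hKa : Klist cs = a) (hKc : Klist cs.tail = c) :
    !![a, -b; c, -d] = Mneg cs ∧
    (∀ (δ : ℤ) (ds : List ℤ), (δ = 1 ∨ δ = -1) → (∀ x ∈ ds, 1 ≤ x) →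
      δ • (!![a, -b; c, -d] : Matrix (Fin 2) (Fin 2) ℤ) = Mneg ds →
      cs.length ≤ ds.length) := by
  cases cs with
  | nil => exact absurd rfl hne
  | cons x u =>
    have hu : ∀ z ∈ u, 2 ≤ z := htail
    have hx : 1 ≤ x := hpos x (by simp)
    have hA : !![a, -b; c, -d] = Mneg (x :: u) := by
      have f := first_col (x :: u)
      have f1 := f.1
      have f2 := f.2 hne
      rw [hKa] at f1
      rw [hKc] at f2
      obtain ⟨P, Q, R, S, e, h1, h2, h3, h4, h5, h6, h7⟩ := pure_inv u hu
      have hdet' : (Mneg (x :: u)).det = 1 := by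
        clear * -
        generalize x :: u = l
        induction l with
        | nil => simp [Mneg_nil]
        | cons y l ih => rw [Mneg_cons, Matrix.det_mul, ih]; simp
      have e1 := Mneg_cons_of x _ _ _ _ _ e
      have i2 : 1 ≤ x * Q - S := by nlinarith
      have i3 : 0 ≤ (x * P - R) - (x * Q - S) := by nlinarith
      rw [e1] at f1 f2 hdet' ⊢
      rw [Matrix.det_fin_two] at hdet'
      simp at f1 f2 hdet'
      subst f2
      rw [f1] at i3 hdet' ⊢
      have hdet2 : (x * Q - S) * P - a * Q = 1 := by linarith
      clear hdet'
      generalize x * Q - S = q at *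
      have key : (b - q) * P = a * (d - Q) := by linarith
      have hcop : IsCoprime a P := ⟨-d, b, by linarith⟩
      have hdvd : a ∣ (b - q) := hcop.dvd_of_dvd_mul_right ⟨_, key⟩
      have hbq : b - q = 0 := by
        apply Int.eq_zero_of_abs_lt_dvd hdvd
        rw [abs_lt]; constructor <;> omega
      have hdQ : d - Q = 0 := by
        rw [hbq, zero_mul] at key
        rcases mul_eq_zero.1 key.symm with h | h <;> omega
      have : b = q := by omega
      have : d = Q := by omega
      subst_vars
      rfl
    exact ⟨hA, fun δ ds hδ hds h =>
      min_len a b c d ha hb hc hd hab x u hu hA ds.length δ ds le_rfl hδ hds h⟩
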